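/- arXiv:1405.6127 — 2 statements merged into one kernel-verified Lean document; each statement's English description precedes it below -/
import Mathlib

section
/- Let f ∈ L¹(ℝⁿ, ℝⁿ) be of the form f(x) = (x/|x|) g(|x|) for some function g. Then there is a continuous function h : [0,∞) → ℝ with h(0) = 0 and h(t) → 0 as t → ∞ such that the Fourier transform of f satisfies f̂(ξ) = i (ξ/|ξ|) h(|ξ|) for all ξ ∈ ℝⁿ. -/
open MeasureTheory Metric Filter Set
open scoped ENNReal NNReal RealInnerProductSpace FourierTransform Topology

noncomputable section

/-- `ℝⁿ` as a Euclidean space. -/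
abbrev Eucl (n : ℕ) := EuclideanSpace ℝ (Fin n)

/-- `ω_n`, the volume of the unit ball in `ℝⁿ`. -/
def ballVol (n : ℕ) : ℝ := ((volume : Measure (Eucl n)) (ball 0 1)).toReal

/-- A measure on the unit sphere of `ℝⁿ` (the cone measure, which is proportional to the
`(n-1)`-dimensional surface measure). -/
def sphereMeasure (n : ℕ) : Measure (Eucl n) :=
  Measure.map (fun x : Eucl n => ‖x‖⁻¹ • x)
    ((volume : Measure (Eucl n)).restrict (ball 0 1 \ {0}))

/-- The average `f_{S(x,t)}` of `f` over the sphere `S(x,t)` with respect to the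
`(n-1)`-dimensional surface measure. -/
def sphereAvg (n : ℕ) (f : Eucl n → ℝ) (x : Eucl n) (t : ℝ) : ℝ :=
  ⨍ z, f (x + t • z) ∂(sphereMeasure n)

/-- The average `f_{B(x,t)}` of `f` over the ball `B(x,t)` with respect to Lebesgue measure. -/
def ballAvg (n : ℕ) (f : Eucl n → ℝ) (x : Eucl n) (t : ℝ) : ℝ :=
  ⨍ y in ball x t, f y

/-- `F` is the weak (distributional) gradient of `f`. -/
def HasWeakGradient (n : ℕ) (f : Eucl n → ℝ) (F : Eucl n → Eucl n) : Prop :=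
  ∀ φ : Eucl n → ℝ, ContDiff ℝ (⊤ : ℕ∞) φ → HasCompactSupport φ →
    ∀ v : Eucl n, ∫ x, f x * fderiv ℝ φ x v = - ∫ x, ⟪F x, v⟫ * φ x

/-- `f ∈ W^{1,1}_loc(ℝⁿ)` with weak gradient `F`. -/
def MemW11loc (n : ℕ) (f : Eucl n → ℝ) (F : Eucl n → Eucl n) : Prop :=
  LocallyIntegrable f volume ∧ LocallyIntegrable F volume ∧ HasWeakGradient n f F

/-- The square function `Tf` (with spherical averages), as an `ℝ≥0∞`-valued function. -/
def Tsq (n : ℕ) (f : Eucl n → ℝ) (x : Eucl n) : ℝ≥0∞ :=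
  (∫⁻ t in Ioi (0:ℝ), ENNReal.ofReal ((f x - sphereAvg n f x t) ^ 2 / t ^ 3)) ^ (1/2 : ℝ)

/-- The square function `Sf` (with ball averages), as an `ℝ≥0∞`-valued function. -/
def Ssq (n : ℕ) (f : Eucl n → ℝ) (x : Eucl n) : ℝ≥0∞ :=
  (∫⁻ t in Ioi (0:ℝ), ENNReal.ofReal ((f x - ballAvg n f x t) ^ 2 / t ^ 3)) ^ (1/2 : ℝ)

/-- The kernel `φ(x) = (1/(nω_n)) (x/|x|ⁿ) χ_{B(0,1)}(x)`. -/
def phiK (n : ℕ) (x : Eucl n) : Eucl n :=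
  if ‖x‖ < 1 then (((n : ℝ) * ballVol n)⁻¹ * (‖x‖ ^ n)⁻¹) • x else 0

/-- The kernel `η(x) = (1/(nω_n)) x χ_{B(0,1)}(x)`. -/
def etaK (n : ℕ) (x : Eucl n) : Eucl n :=
  if ‖x‖ < 1 then ((n : ℝ) * ballVol n)⁻¹ • x else 0

/-- The kernel `ψ(x) = (1/(nω_n)) (x/|x|ⁿ - x) χ_{B(0,1)}(x) = φ(x) - η(x)`. -/
def psiK (n : ℕ) (x : Eucl n) : Eucl n := phiK n x - etaK n x

/-- The dilation `K_t(x) = t^{-n} K(x/t)` of a kernel. -/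
def dil (n : ℕ) (K : Eucl n → Eucl n) (t : ℝ) (x : Eucl n) : Eucl n :=
  (t ^ n)⁻¹ • K (t⁻¹ • x)

/-- `φ_t(x) = t^{-n} φ(x/t)`. -/
def phit (n : ℕ) (t : ℝ) (x : Eucl n) : Eucl n := dil n (phiK n) t x

/-- `ψ_t(x) = t^{-n} ψ(x/t)`. -/
def psit (n : ℕ) (t : ℝ) (x : Eucl n) : Eucl n := dil n (psiK n) t x

/-- The square function `T̃` applied to a vector field `G` (which plays the role of `Rg`):
`(∫₀^∞ |(φ_t * G)(x)|² dt/t)^{1/2}`, as an `ℝ≥0∞`-valued function. -/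
def TtilSq (n : ℕ) (G : Eucl n → Eucl n) (x : Eucl n) : ℝ≥0∞ :=
  (∫⁻ t in Ioi (0:ℝ), ENNReal.ofReal ((∫ y, ⟪phit n t y, G (x - y)⟫) ^ 2 / t)) ^ (1/2 : ℝ)

/-- The square function `S̃` applied to a vector field `G`. -/
def StilSq (n : ℕ) (G : Eucl n → Eucl n) (x : Eucl n) : ℝ≥0∞ :=
  (∫⁻ t in Ioi (0:ℝ), ENNReal.ofReal ((∫ y, ⟪psit n t y, G (x - y)⟫) ^ 2 / t)) ^ (1/2 : ℝ)

/-- The `j`-th Riesz transform of a (Schwartz-class or integrable) function, defined via the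
Fourier multiplier `-i ξ_j/|ξ|`:  `R_j φ = (-i (ξ_j/|ξ|) φ̂(ξ))^∨`. -/
def rieszOne (n : ℕ) (j : Fin n) (φ : Eucl n → ℝ) (x : Eucl n) : ℝ :=
  (𝓕⁻ (fun ξ : Eucl n => (-Complex.I) * ((ξ j / ‖ξ‖ : ℝ) : ℂ)
      * 𝓕 (fun y : Eucl n => ((φ y : ℝ) : ℂ)) ξ) x).re

/-- `G = Rg` is the (vector valued) Riesz transform of `g`, characterized by duality against
Schwartz functions (the transpose of `R_j` is `-R_j`). -/
def IsRiesz (n : ℕ) (g : Eucl n → ℝ) (G : Eucl n → Eucl n) : Prop :=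
  LocallyIntegrable G volume ∧
    ∀ (j : Fin n) (φ : SchwartzMap (Eucl n) ℝ),
      ∫ x, G x j * φ x = - ∫ x, g x * rieszOne n j (⇑φ) x

/-- The fractional Laplacian `(-Δ)^{1/2} φ = (2π|ξ| φ̂(ξ))^∨`. -/
def fracLapHalf (n : ℕ) (φ : Eucl n → ℝ) (x : Eucl n) : ℝ :=
  (𝓕⁻ (fun ξ : Eucl n => ((2 * Real.pi * ‖ξ‖ : ℝ) : ℂ)
      * 𝓕 (fun y : Eucl n => ((φ y : ℝ) : ℂ)) ξ) x).re

/-!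
The field `f` commutes with every linear isometry `A` of the space, hence so does its Fourier
transform: `f̂(Aξ) = A f̂(ξ)`. The reflection in the hyperplane orthogonal to some `v ⟂ ξ` fixes `ξ`
and negates `v`, so `f̂(ξ)` has no component along `v` and is therefore a multiple of `ξ`.
Reflections act transitively on each sphere, so that multiple depends on `|ξ|` only. It is purely
imaginary because `f` is real and odd. Thus `h(t)` is the imaginary part of the `e`-component of
`f̂(te)` for any fixed unit vector `e`, and its continuity and decay are those of `f̂`.
-/

section IsometryInvariant

variable {V E : Type*} [NormedAddCommGroup V] [InnerProductSpace ℝ V]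

/-- The vector field `f` commutes with all linear isometries of the space. Only this symmetry of
the fields `x ↦ (x/|x|) g(|x|)` enters the argument. -/
def IsIsometryEquivariant (f : V → V) : Prop :=
  ∀ (A : V ≃ₗᵢ[ℝ] V) (x : V), f (A x) = A (f x)

theorem isIsometryEquivariant_norm_smul (c : ℝ → ℝ) :
    IsIsometryEquivariant fun x : V => c ‖x‖ • x := by
  intro A x
  simp only [A.norm_map, map_smul]

theorem IsIsometryEquivariant.odd {f : V → V} (hf : IsIsometryEquivariant f) :
    Function.Odd f :=
  hf (LinearIsometryEquiv.neg ℝ)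

variable [AddCommGroup E] [Module ℝ E] [TopologicalSpace E]

/-- The field `Φ` of `E`-valued linear forms is unchanged when a linear isometry is applied to both
the base point and the argument. For `E = ℝ` and `Φ ξ = ⟪F ξ, ·⟫` this says that `F` commutes with
linear isometries. -/
def IsIsometryInvariant (Φ : V → V →L[ℝ] E) : Prop :=
  ∀ (A : V ≃ₗᵢ[ℝ] V) (ξ v : V), Φ (A ξ) (A v) = Φ ξ v

namespace IsIsometryInvariant

variable {Φ : V → V →L[ℝ] E}

theorem apply_eq_zero_of_inner_eq_zero (hΦ : IsIsometryInvariant Φ) {ξ v : V}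
    (hv : ⟪v, ξ⟫ = 0) : Φ ξ v = 0 := by
  have hfix : (ℝ ∙ v)ᗮ.reflection ξ = ξ :=
    Submodule.reflection_mem_subspace_eq_self
      (Submodule.mem_orthogonal_singleton_iff_inner_right.2 hv)
  have hneg : -Φ ξ v = Φ ξ v := by
    simpa only [hfix, Submodule.reflection_orthogonalComplement_singleton_eq_neg, map_neg]
      using hΦ (ℝ ∙ v)ᗮ.reflection ξ v
  have : IsAddTorsionFree E := .of_isTorsionFree ℝ E
  exact self_eq_neg.1 hneg.symm

theorem apply_eq_smul_apply_self (hΦ : IsIsometryInvariant Φ) (ξ v : V) :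
    Φ ξ v = (⟪ξ, v⟫ / ‖ξ‖ ^ 2) • Φ ξ ξ := by
  have horth : ⟪v - (⟪ξ, v⟫ / ‖ξ‖ ^ 2) • ξ, ξ⟫ = 0 := by
    rcases eq_or_ne ξ 0 with rfl | hξ
    · exact inner_zero_right _
    · rw [inner_sub_left, real_inner_smul_left, real_inner_self_eq_norm_sq,
        div_mul_cancel₀ _ (pow_ne_zero 2 (norm_ne_zero_iff.2 hξ)), real_inner_comm, sub_self]
  rw [← sub_eq_zero, ← map_smul, ← map_sub]
  exact hΦ.apply_eq_zero_of_inner_eq_zero horth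

theorem apply_self_eq_of_norm_eq (hΦ : IsIsometryInvariant Φ) {ξ η : V} (h : ‖ξ‖ = ‖η‖) :
    Φ ξ ξ = Φ η η := by
  simpa only [Submodule.reflection_sub h] using (hΦ (ℝ ∙ (ξ - η))ᗮ.reflection ξ ξ).symm

theorem apply_eq_smul_apply_norm_smul (hΦ : IsIsometryInvariant Φ) {e : V} (he : ‖e‖ = 1)
    (ξ v : V) : Φ ξ v = (⟪ξ, v⟫ / ‖ξ‖) • Φ (‖ξ‖ • e) e := by
  have hnorm : ‖ξ‖ = ‖‖ξ‖ • e‖ := by rw [norm_smul, norm_norm, he, mul_one]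
  calc Φ ξ v = (⟪ξ, v⟫ / ‖ξ‖ ^ 2) • Φ (‖ξ‖ • e) (‖ξ‖ • e) := by
        rw [hΦ.apply_eq_smul_apply_self, hΦ.apply_self_eq_of_norm_eq hnorm]
    _ = (⟪ξ, v⟫ / ‖ξ‖) • Φ (‖ξ‖ • e) e := by
        rw [map_smul, smul_smul, sq, ← div_div, div_mul_cancel_of_imp]
        intro h
        rw [h, div_zero]

end IsIsometryInvariant

end IsometryInvariant

theorem integrable_ofRealCLM_comp_innerSL {α V : Type*} [MeasurableSpace α] {μ : Measure α}
    [NormedAddCommGroup V] [InnerProductSpace ℝ V] {f : α → V} (hf : Integrable f μ) :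
    Integrable (fun x => Complex.ofRealCLM ∘L innerSL ℝ (f x)) μ :=
  (ContinuousLinearMap.compL ℝ V ℝ ℂ Complex.ofRealCLM ∘L innerSL ℝ).integrable_comp hf

section Fourier

variable {V : Type*} [NormedAddCommGroup V] [InnerProductSpace ℝ V] [FiniteDimensional ℝ V]
  [MeasurableSpace V] [BorelSpace V]

theorem fourier_ofReal_neg (u : V → ℝ) (ξ : V) :
    𝓕 (fun x => (u x : ℂ)) (-ξ) = starRingEnd ℂ (𝓕 (fun x => (u x : ℂ)) ξ) := by
  rw [Real.fourier_eq, Real.fourier_eq, ← integral_conj]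
  congr 1
  funext x
  rw [Circle.smul_def, Circle.smul_def, smul_eq_mul, smul_eq_mul, map_mul, Complex.conj_ofReal,
    inner_neg_right, AddChar.map_neg_eq_inv, Circle.coe_inv_eq_conj]

theorem fourier_ofReal_re_eq_zero_of_odd {u : V → ℝ} (hu : Function.Odd u) (ξ : V) :
    (𝓕 (fun x => (u x : ℂ)) ξ).re = 0 := by
  have hodd : 𝓕 (fun x => (u x : ℂ)) (-ξ) = -𝓕 (fun x => (u x : ℂ)) ξ := by
    rw [← Real.fourierInv_eq_fourier_neg, Real.fourierInv_eq_fourier_comp_neg]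
    simp only [hu _, Complex.ofReal_neg, Real.fourier_eq, smul_neg, integral_neg]
  have hre := congrArg Complex.re ((fourier_ofReal_neg u ξ).symm.trans hodd)
  rw [Complex.conj_re, Complex.neg_re] at hre
  exact self_eq_neg.1 hre

theorem continuous_fourier {E : Type*} [NormedAddCommGroup E] [NormedSpace ℂ E] {f : V → E}
    (hf : Integrable f) : Continuous (𝓕 f) :=
  VectorFourier.fourierIntegral_continuous Real.continuous_fourierChar
    (L := innerₗ V) continuous_inner hf

/-- The Fourier transform of a vector field `f`, as the field of complex-valued linear forms
`ξ ↦ (v ↦ f̂(ξ) · v)`; this encoding avoids complexifying `V`. -/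
def fourierForm (f : V → V) : V → V →L[ℝ] ℂ :=
  𝓕 fun x => Complex.ofRealCLM ∘L innerSL ℝ (f x)

variable {f : V → V}

theorem continuous_fourierForm (hf : Integrable f) : Continuous (fourierForm f) :=
  continuous_fourier (integrable_ofRealCLM_comp_innerSL hf)

theorem tendsto_fourierForm_cocompact (f : V → V) :
    Tendsto (fourierForm f) (cocompact V) (𝓝 0) :=
  tendsto_integral_exp_inner_smul_cocompact _

theorem fourierForm_apply (hf : Integrable f) (ξ v : V) :
    fourierForm f ξ v = 𝓕 (fun x => ((⟪f x, v⟫ : ℝ) : ℂ)) ξ :=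
  Real.fourier_continuousLinearMap_apply (integrable_ofRealCLM_comp_innerSL hf)

theorem isIsometryInvariant_fourierForm (hf : Integrable f) (hequiv : IsIsometryEquivariant f) :
    IsIsometryInvariant (fourierForm f) := by
  intro A ξ v
  rw [fourierForm_apply hf, fourierForm_apply hf, ← Real.fourier_comp_linearIsometry]
  simp only [Function.comp_def, hequiv A, A.inner_map_map]

theorem fourierForm_apply_eq_I_mul_im_of_odd (hf : Integrable f) (hodd : Function.Odd f)
    (ξ v : V) : fourierForm f ξ v = Complex.I * (fourierForm f ξ v).im := by
  have hre : (fourierForm f ξ v).re = 0 := by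
    rw [fourierForm_apply hf]
    exact fourier_ofReal_re_eq_zero_of_odd (fun x => by rw [hodd x, inner_neg_left]) ξ
  conv_lhs =>
    rw [← Complex.re_add_im (fourierForm f ξ v), hre, Complex.ofReal_zero, zero_add, mul_comm]

theorem fourier_transform_odd_radial_general [Nontrivial V] (hf : Integrable f)
    (hequiv : IsIsometryEquivariant f) :
    ∃ h : ℝ → ℝ, Continuous h ∧ h 0 = 0 ∧ Tendsto h atTop (𝓝 0) ∧
      ∀ ξ v : V, 𝓕 (fun x => ((⟪f x, v⟫ : ℝ) : ℂ)) ξ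
        = Complex.I * ((⟪ξ, v⟫ / ‖ξ‖ : ℝ) : ℂ) * (h ‖ξ‖ : ℂ) := by
  obtain ⟨e, he⟩ := exists_norm_eq V zero_le_one
  have hinv := isIsometryInvariant_fourierForm hf hequiv
  have hcomponent : Continuous fun Λ : V →L[ℝ] ℂ => (Λ e).im :=
    Complex.continuous_im.comp (continuous_id.clm_apply continuous_const)
  have hray : Topology.IsClosedEmbedding fun t : ℝ => t • e :=
    isClosedEmbedding_smul_left (norm_ne_zero_iff.1 (he ▸ one_ne_zero))
  refine ⟨fun t => (fourierForm f (t • e) e).im, ?_, ?_, ?_, fun ξ v => ?_⟩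
  · exact hcomponent.comp ((continuous_fourierForm hf).comp hray.continuous)
  · simp only [zero_smul, hinv.apply_eq_zero_of_inner_eq_zero (inner_zero_right e),
      Complex.zero_im]
  · exact (hcomponent.tendsto' 0 0 rfl).comp
      ((tendsto_fourierForm_cocompact f).comp (hray.tendsto_cocompact.mono_left atTop_le_cocompact))
  · rw [← fourierForm_apply hf, hinv.apply_eq_smul_apply_norm_smul he, Complex.real_smul,
      fourierForm_apply_eq_I_mul_im_of_odd hf hequiv.odd (‖ξ‖ • e) e, mul_left_comm,
      mul_assoc]

end Fourier

/-- If `f ∈ L¹(ℝⁿ,ℝⁿ)` has the form `f(x) = (x/|x|) g(|x|)`, then there is a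
continuous `h : [0,∞) → ℝ` with `h(0) = 0`, `h(t) → 0` as `t → ∞`, such that
`f̂(ξ) = i (ξ/|ξ|) h(|ξ|)` for all `ξ`. -/
theorem fourier_transform_odd_radial (n : ℕ) (hn : 0 < n) (f : Eucl n → Eucl n) (g : ℝ → ℝ)
    (hint : Integrable f volume) (hform : ∀ x : Eucl n, f x = (g ‖x‖ / ‖x‖) • x) :
    ∃ h : ℝ → ℝ, ContinuousOn h (Ici 0) ∧ h 0 = 0 ∧ Tendsto h atTop (nhds 0) ∧
      ∀ (ξ : Eucl n) (j : Fin n),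
        𝓕 (fun x : Eucl n => ((f x j : ℝ) : ℂ)) ξ
          = Complex.I * ((ξ j / ‖ξ‖ : ℝ) : ℂ) * ((h ‖ξ‖ : ℝ) : ℂ) := by
  have : Nonempty (Fin n) := ⟨⟨0, hn⟩⟩
  obtain ⟨h, hcont, h0, hlim, hfourier⟩ := fourier_transform_odd_radial_general hint
    (funext hform ▸ isIsometryEquivariant_norm_smul fun r => g r / r)
  exact ⟨h, hcont.continuousOn, h0, hlim, fun ξ j => by
    simpa [EuclideanSpace.inner_single_right] using hfourier ξ (EuclideanSpace.single j 1)⟩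

end
end

section
/- If m : ℝⁿ \ {0} → ℝⁿ is a measurable function that is homogeneous of degree 0 (i.e., m(tx) = m(x) for all t > 0 and x ≠ 0) and commutes with orthogonal transformations (i.e., m(ρ(x)) = ρ(m(x)) for every ρ ∈ O(n) and every x ≠ 0), then there is a constant C ∈ ℝ such that m(x) = C x/|x| for all x ≠ 0. -/
open MeasureTheory Metric Filter Set
open scoped ENNReal NNReal RealInnerProductSpace FourierTransform Topology

noncomputable section

/-!
A vector fixed by every isometry that fixes `x` lies on the line through `x`, because the reflection
in that line fixes nothing else. Hence an equivariant `m` satisfies `m x = a x • x`, and since the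
isometries act transitively on each sphere, `a x` depends only on `‖x‖`. Homogeneity reduces the
computation of `m` to the unit sphere, where `a` is constant.
-/

theorem mem_span_singleton_of_forall_linearIsometryEquiv {𝕜 E : Type*} [RCLike 𝕜]
    [NormedAddCommGroup E] [InnerProductSpace 𝕜 E] {x y : E}
    (h : ∀ ρ : E ≃ₗᵢ[𝕜] E, ρ x = x → ρ y = y) : y ∈ Submodule.span 𝕜 {x} :=
  (Submodule.reflection_eq_self_iff y).mp <|
    h _ (Submodule.reflection_mem_subspace_eq_self (Submodule.mem_span_singleton_self x))

section Equivariant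

variable {E : Type*} [NormedAddCommGroup E] [InnerProductSpace ℝ E]

theorem exists_linearIsometryEquiv_apply_eq_of_norm_eq {x y : E} (h : ‖x‖ = ‖y‖) :
    ∃ ρ : E ≃ₗᵢ[ℝ] E, ρ x = y :=
  ⟨_, Submodule.reflection_sub h⟩

theorem exists_eq_smul_self_of_equivariant {m : E → E}
    (hequiv : ∀ (ρ : E ≃ₗᵢ[ℝ] E) (x : E), x ≠ 0 → m (ρ x) = ρ (m x)) {x : E} (hx : x ≠ 0) :
    ∃ a : ℝ, m x = a • x := by
  have hspan : m x ∈ Submodule.span ℝ {x} :=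
    mem_span_singleton_of_forall_linearIsometryEquiv fun ρ hρ => by rw [← hequiv ρ x hx, hρ]
  obtain ⟨a, ha⟩ := Submodule.mem_span_singleton.mp hspan
  exact ⟨a, ha.symm⟩

theorem exists_eq_comp_norm_smul_self_of_equivariant {m : E → E}
    (hequiv : ∀ (ρ : E ≃ₗᵢ[ℝ] E) (x : E), x ≠ 0 → m (ρ x) = ρ (m x)) :
    ∃ c : ℝ → ℝ, ∀ x : E, x ≠ 0 → m x = c ‖x‖ • x := by
  choose! a ha using fun x (hx : x ≠ 0) => exists_eq_smul_self_of_equivariant hequiv hx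
  have ha_radial : a.FactorsThrough norm := by
    intro x y hxy
    rcases eq_or_ne x 0 with rfl | hx
    · rw [norm_eq_zero.mp (hxy.symm.trans norm_zero)]
    obtain ⟨ρ, rfl⟩ := exists_linearIsometryEquiv_apply_eq_of_norm_eq hxy
    have hρx : ρ x ≠ 0 := ρ.map_ne_zero_iff.mpr hx
    refine smul_left_injective ℝ hρx ?_
    calc a x • ρ x = ρ (m x) := by rw [ha x hx, map_smul]
      _ = m (ρ x) := (hequiv ρ x hx).symm
      _ = a (ρ x) • ρ x := ha _ hρx
  obtain ⟨c, rfl⟩ := (Function.factorsThrough_iff a).mp ha_radial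
  exact ⟨c, ha⟩

theorem homogeneous_equivariant_eq_const_smul_general {m : E → E}
    (hhom : ∀ t : ℝ, 0 < t → ∀ x : E, x ≠ 0 → m (t • x) = m x)
    (hequiv : ∀ (ρ : E ≃ₗᵢ[ℝ] E) (x : E), x ≠ 0 → m (ρ x) = ρ (m x)) :
    ∃ C : ℝ, ∀ x : E, x ≠ 0 → m x = (C * ‖x‖⁻¹) • x := by
  obtain ⟨c, hc⟩ := exists_eq_comp_norm_smul_self_of_equivariant hequiv
  refine ⟨c 1, fun x hx => ?_⟩
  have hinv : 0 < ‖x‖⁻¹ := inv_pos.mpr (norm_pos_iff.mpr hx)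
  have hunit : ‖‖x‖⁻¹ • x‖ = 1 := norm_smul_inv_norm (𝕜 := ℝ) hx
  calc m x = m (‖x‖⁻¹ • x) := (hhom _ hinv x hx).symm
    _ = c 1 • ‖x‖⁻¹ • x := by rw [hc _ (smul_ne_zero hinv.ne' hx), hunit]
    _ = (c 1 * ‖x‖⁻¹) • x := smul_smul _ _ _

end Equivariant

/-- If `m : ℝⁿ \ {0} → ℝⁿ` is measurable, homogeneous of degree `0`, and
commutes with orthogonal transformations, then `m(x) = C x/|x|` for some constant `C ∈ ℝ`. -/
theorem homogeneous_equivariant_eq_const_smul (n : ℕ) (hn : 0 < n) (m : Eucl n → Eucl n)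
    (hmeas : Measurable m)
    (hhom : ∀ t : ℝ, 0 < t → ∀ x : Eucl n, x ≠ 0 → m (t • x) = m x)
    (hequiv : ∀ (ρ : Eucl n ≃ₗᵢ[ℝ] Eucl n) (x : Eucl n), x ≠ 0 → m (ρ x) = ρ (m x)) :
    ∃ C : ℝ, ∀ x : Eucl n, x ≠ 0 → m x = (C * ‖x‖⁻¹) • x :=
  homogeneous_equivariant_eq_const_smul_general hhom hequiv

end
end
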